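/- (Deviation estimates along the trajectory tube.) Let K ⊆ U be compact, and let (r(t),θ(t),ρ(t),ω(t)), t ≤ 0, be a solution of the Hamiltonian system with θ(t) ∈ K, |ρ(t)| ≤ C₀, |ω(t)| ≤ C₀, and r(t) ≥ c₀|t+T₀| for all t ≤ 0, where T₀ < 0 and c₀, C₀ > 0. Then there exist δ' > 0 and C₁ > 0 such that for all δ₀ ∈ (0,δ'), all sufficiently negative T₀, all t ≤ 0, and all (r,θ,ρ,ω) ∈ (1,∞)×U×ℝ×ℝ^{n-1} with |r − r(t)| ≤ 10δ₀|t+T₀|, |θ − θ(t)| ≤ 2δ₀, |ρ − ρ(t)| ≤ 2δ₀ and |ω − ω(t)| ≤ 2δ₀, one has: |∂p/∂ρ(r,θ,ρ,ω) − ∂p/∂ρ(r(t),θ(t),ρ(t),ω(t))| ≤ 4δ₀ + C₁|t+T₀|^{-1-μ}; |∂p/∂ω(r,θ,ρ,ω) − ∂p/∂ω(r(t),θ(t),ρ(t),ω(t))| ≤ C₁|t+T₀|^{-1-μ}; |∂p/∂r(r,θ,ρ,ω) − ∂p/∂r(r(t),θ(t),ρ(t),ω(t))| ≤ C₁|t+T₀|^{-2-μ};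 |∂p/∂θ(r,θ,ρ,ω) − ∂p/∂θ(r(t),θ(t),ρ(t),ω(t))| ≤ C₁|t+T₀|^{-1-μ}. -/

import Mathlib

open Real Set Filter Topology

namespace Scattering

/-- The Euclidean norm of a vector in `Fin m → ℝ`. -/
noncomputable def eNorm {m : ℕ} (v : Fin m → ℝ) : ℝ := Real.sqrt (∑ j, v j ^ 2)

/-- Partial derivative in the radial variable of a function of `(r, θ)`. -/
noncomputable def pderivR {m : ℕ} (f : ℝ → (Fin m → ℝ) → ℝ) : ℝ → (Fin m → ℝ) → ℝ :=
  fun r θ => deriv (fun s => f s θ) r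

/-- Partial derivative in the `j`-th angular variable of a function of `(r, θ)`. -/
noncomputable def pderivTheta {m : ℕ} (j : Fin m) (f : ℝ → (Fin m → ℝ) → ℝ) :
    ℝ → (Fin m → ℝ) → ℝ :=
  fun r θ => fderiv ℝ (f r) θ (Pi.single j 1)

/-- Iterated angular derivatives `∂_θ^α` for a multi-index `α` (a list of directions). -/
noncomputable def thetaDerivs {m : ℕ} (α : List (Fin m)) (f : ℝ → (Fin m → ℝ) → ℝ) :
    ℝ → (Fin m → ℝ) → ℝ :=
  α.foldr pderivTheta f

/-- `DecayOn f ν S K` : for all `k, α` there is `C > 0` with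
`|∂_r^k ∂_θ^α f(r,θ)| ≤ C r^{-ν-k}` for `r ∈ (S,∞)`, `θ ∈ K`. -/
def DecayOn {m : ℕ} (f : ℝ → (Fin m → ℝ) → ℝ) (ν S : ℝ) (K : Set (Fin m → ℝ)) : Prop :=
  ∀ (k : ℕ) (α : List (Fin m)), ∃ C > 0, ∀ r ∈ Ioi S, ∀ θ ∈ K,
    |(pderivR (m := m))^[k] (thetaDerivs α f) r θ| ≤ C * r ^ (-ν - (k : ℝ))

/-- The classical kinetic energy function
`p(r,θ,ρ,ω) = ρ² + r⁻²Σ h^{jk} ω_j ω_k + a₀ ρ² + r⁻¹ Σ a₁^j ρ ω_j + r⁻² Σ a₂^{jk} ω_j ω_k`. -/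
noncomputable def energy {m : ℕ} (hM : (Fin m → ℝ) → Matrix (Fin m) (Fin m) ℝ)
    (a0 : ℝ → (Fin m → ℝ) → ℝ) (a1 : ℝ → (Fin m → ℝ) → Fin m → ℝ)
    (a2 : ℝ → (Fin m → ℝ) → Matrix (Fin m) (Fin m) ℝ) :
    ℝ → (Fin m → ℝ) → ℝ → (Fin m → ℝ) → ℝ :=
  fun r θ ρ ω =>
    ρ ^ 2 + (∑ j, ∑ k, hM θ j k * ω j * ω k) / r ^ 2 + a0 r θ * ρ ^ 2
      + (∑ j, a1 r θ j * ρ * ω j) / r + (∑ j, ∑ k, a2 r θ j k * ω j * ω k) / r ^ 2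

section PhaseDerivs

variable {m : ℕ} (p : ℝ → (Fin m → ℝ) → ℝ → (Fin m → ℝ) → ℝ)

/-- `∂p/∂r`. -/
noncomputable def pdR (r : ℝ) (θ : Fin m → ℝ) (ρ : ℝ) (ω : Fin m → ℝ) : ℝ :=
  deriv (fun s => p s θ ρ ω) r

/-- `∂p/∂θ_j`. -/
noncomputable def pdTheta (j : Fin m) (r : ℝ) (θ : Fin m → ℝ) (ρ : ℝ) (ω : Fin m → ℝ) : ℝ :=
  fderiv ℝ (fun θ' => p r θ' ρ ω) θ (Pi.single j 1)

/-- `∂p/∂ρ`. -/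
noncomputable def pdRho (r : ℝ) (θ : Fin m → ℝ) (ρ : ℝ) (ω : Fin m → ℝ) : ℝ :=
  deriv (fun s => p r θ s ω) ρ

/-- `∂p/∂ω_j`. -/
noncomputable def pdOmega (j : Fin m) (r : ℝ) (θ : Fin m → ℝ) (ρ : ℝ) (ω : Fin m → ℝ) : ℝ :=
  fderiv ℝ (fun ω' => p r θ ρ ω') ω (Pi.single j 1)

/-- `(r,θ,ρ,ω)` solves the Hamiltonian system
`ṙ = ∂p/∂ρ, θ̇ = ∂p/∂ω, ρ̇ = -∂p/∂r, ω̇ = -∂p/∂θ` on the set `I` of times. -/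
def IsHamSolOn (r : ℝ → ℝ) (θ : ℝ → Fin m → ℝ) (ρ : ℝ → ℝ) (ω : ℝ → Fin m → ℝ)
    (I : Set ℝ) : Prop :=
  ∀ t ∈ I,
    HasDerivAt r (pdRho p (r t) (θ t) (ρ t) (ω t)) t ∧
    (∀ j, HasDerivAt (fun s => θ s j) (pdOmega p j (r t) (θ t) (ρ t) (ω t)) t) ∧
    HasDerivAt ρ (-pdR p (r t) (θ t) (ρ t) (ω t)) t ∧
    (∀ j, HasDerivAt (fun s => ω s j) (-pdTheta p j (r t) (θ t) (ρ t) (ω t)) t)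

/-- The interaction-picture (time-dependent) Hamiltonian `K(t,R,θ,ρ,ω) = ρ² - p(R+2tρ,θ,ρ,ω)`. -/
noncomputable def Kint (t R : ℝ) (θ : Fin m → ℝ) (ρ : ℝ) (ω : Fin m → ℝ) : ℝ :=
  ρ ^ 2 - p (R + 2 * t * ρ) θ ρ ω

/-- `∂K/∂R`. -/
noncomputable def KdR (t R : ℝ) (θ : Fin m → ℝ) (ρ : ℝ) (ω : Fin m → ℝ) : ℝ :=
  deriv (fun x => Kint p t x θ ρ ω) R

/-- `∂K/∂θ_j`. -/
noncomputable def KdTheta (j : Fin m) (t R : ℝ) (θ : Fin m → ℝ) (ρ : ℝ) (ω : Fin m → ℝ) : ℝ :=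
  fderiv ℝ (fun θ' => Kint p t R θ' ρ ω) θ (Pi.single j 1)

/-- `∂K/∂ρ`. -/
noncomputable def KdRho (t R : ℝ) (θ : Fin m → ℝ) (ρ : ℝ) (ω : Fin m → ℝ) : ℝ :=
  deriv (fun x => Kint p t R θ x ω) ρ

/-- `∂K/∂ω_j`. -/
noncomputable def KdOmega (j : Fin m) (t R : ℝ) (θ : Fin m → ℝ) (ρ : ℝ) (ω : Fin m → ℝ) : ℝ :=
  fderiv ℝ (fun ω' => Kint p t R θ ρ ω') ω (Pi.single j 1)

end PhaseDerivs

/-- The phase space `ℝ × ℝ^m × ℝ × ℝ^m` with coordinates `(R, θ, ρ, ω)`. -/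
abbrev Phase (m : ℕ) : Type := ℝ × (Fin m → ℝ) × ℝ × (Fin m → ℝ)

/-- A curve `f = (R,θ,ρ,ω)` solves the interaction-picture Hamiltonian system
`Ṙ = ∂K/∂ρ, θ̇ = ∂K/∂ω, ρ̇ = -∂K/∂R, ω̇ = -∂K/∂θ` on the set `I` of times. -/
def IsIntSolOn {m : ℕ} (p : ℝ → (Fin m → ℝ) → ℝ → (Fin m → ℝ) → ℝ)
    (f : ℝ → Phase m) (I : Set ℝ) : Prop :=
  ∀ t ∈ I,
    HasDerivAt (fun s => (f s).1) (KdRho p t (f t).1 (f t).2.1 (f t).2.2.1 (f t).2.2.2) t ∧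
    (∀ j, HasDerivAt (fun s => (f s).2.1 j)
      (KdOmega p j t (f t).1 (f t).2.1 (f t).2.2.1 (f t).2.2.2) t) ∧
    HasDerivAt (fun s => (f s).2.2.1)
      (-(KdR p t (f t).1 (f t).2.1 (f t).2.2.1 (f t).2.2.2)) t ∧
    (∀ j, HasDerivAt (fun s => (f s).2.2.2 j)
      (-(KdTheta p j t (f t).1 (f t).2.1 (f t).2.2.1 (f t).2.2.2)) t)

/-- The data of a scattering metric of short-range type on the end `(1,∞) × U`:
the boundary metric `h` (smooth, symmetric, positive definite) and the coefficients
`a₀, a₁, a₂` of the kinetic energy, smooth on `(1,∞) × U` with the short-range decay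
`|∂_r^k ∂_θ^α a₀| ≤ C r^{-1-μ-k}`, `|∂_r^k ∂_θ^α a₁| ≤ C r^{-μ-k}`,
`|∂_r^k ∂_θ^α a₂| ≤ C r^{-μ-k}` on `(1,∞) × K` for every compact `K ⊆ U`. -/
structure Coeffs (m : ℕ) (μ : ℝ) (U : Set (Fin m → ℝ)) where
  hM : (Fin m → ℝ) → Matrix (Fin m) (Fin m) ℝ
  a0 : ℝ → (Fin m → ℝ) → ℝ
  a1 : ℝ → (Fin m → ℝ) → Fin m → ℝ
  a2 : ℝ → (Fin m → ℝ) → Matrix (Fin m) (Fin m) ℝ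
  hM_smooth : ∀ j k, ContDiffOn ℝ (⊤ : ℕ∞) (fun θ => hM θ j k) U
  hM_symm : ∀ θ ∈ U, (hM θ).IsSymm
  hM_posdef : ∀ θ ∈ U, (hM θ).PosDef
  a0_smooth : ContDiffOn ℝ (⊤ : ℕ∞) (fun z : ℝ × (Fin m → ℝ) => a0 z.1 z.2) (Ioi (1:ℝ) ×ˢ U)
  a1_smooth : ∀ j, ContDiffOn ℝ (⊤ : ℕ∞) (fun z : ℝ × (Fin m → ℝ) => a1 z.1 z.2 j) (Ioi (1:ℝ) ×ˢ U)
  a2_smooth : ∀ j k, ContDiffOn ℝ (⊤ : ℕ∞) (fun z : ℝ × (Fin m → ℝ) => a2 z.1 z.2 j k) (Ioi (1:ℝ) ×ˢ U)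
  a2_symm : ∀ r θ j k, a2 r θ j k = a2 r θ k j
  a0_decay : ∀ K : Set (Fin m → ℝ), IsCompact K → K ⊆ U → DecayOn a0 (1 + μ) 1 K
  a1_decay : ∀ K : Set (Fin m → ℝ), IsCompact K → K ⊆ U →
    ∀ j, DecayOn (fun r θ => a1 r θ j) μ 1 K
  a2_decay : ∀ K : Set (Fin m → ℝ), IsCompact K → K ⊆ U →
    ∀ j k, DecayOn (fun r θ => a2 r θ j k) μ 1 K

/-- The kinetic energy function associated to the data `c`. -/
noncomputable def Coeffs.p {m : ℕ} {μ : ℝ} {U : Set (Fin m → ℝ)} (c : Coeffs m μ U) :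
    ℝ → (Fin m → ℝ) → ℝ → (Fin m → ℝ) → ℝ :=
  energy c.hM c.a0 c.a1 c.a2

/-!
Away from the free part `ρ ^ 2`, every term of the energy is a product of a smooth function of
`(θ, ρ, ω)`, a power of `r⁻¹`, and possibly a decaying coefficient. Such products are
`O(r ^ (-1 - μ))`, a rate kept by every first derivative and improved by one power of `r` by the
radial one. On the tube `r` is at least a multiple of `|t + T₀|`, so the derivatives of `p - ρ ^ 2`
at either phase point are already as small as the claimed deviation, and no cancellation between
the two points is needed. The term `4 * δ₀` is the deviation of `2 * ρ`, the derivative of the free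
part.
-/

section EuclideanNorm

variable {m : ℕ}

lemma norm_le_eNorm (v : Fin m → ℝ) : ‖v‖ ≤ eNorm v :=
  (pi_norm_le_iff_of_nonneg (Real.sqrt_nonneg _)).2 fun j =>
    Real.abs_le_sqrt
      (Finset.single_le_sum (f := fun i => v i ^ 2) (fun _ _ => sq_nonneg _) (Finset.mem_univ j))

lemma eNorm_le_sqrt_mul {v : Fin m → ℝ} {D : ℝ} (hD : 0 ≤ D) (h : ∀ j, |v j| ≤ D) :
    eNorm v ≤ √m * D := by
  refine Real.sqrt_le_iff.2 ⟨by positivity, ?_⟩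
  calc ∑ j, v j ^ 2 ≤ ∑ _j : Fin m, D ^ 2 := by
        refine Finset.sum_le_sum fun j _ => ?_
        rw [← sq_abs]
        gcongr
        exact h j
    _ = (√m * D) ^ 2 := by simp [mul_pow]

lemma mem_cthickening_of_eNorm_sub_le {K : Set (Fin m → ℝ)} {θ θ' : Fin m → ℝ} {ε : ℝ}
    (hθ : θ ∈ K) (h : eNorm (θ' - θ) ≤ ε) : θ' ∈ Metric.cthickening ε K :=
  Metric.mem_cthickening_of_dist_le θ' θ ε K hθ
    (dist_eq_norm θ' θ ▸ (norm_le_eNorm _).trans h)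

lemma mk_mem_closedBall_of_eNorm_sub_le {ρ ρ' ε : ℝ} {ω ω' : Fin m → ℝ} (hρ : |ρ' - ρ| ≤ ε)
    (hω : eNorm (ω' - ω) ≤ ε) : (ρ', ω') ∈ Metric.closedBall (ρ, ω) ε := by
  rw [mem_closedBall_iff_norm]
  exact max_le hρ ((norm_le_eNorm _).trans hω)

end EuclideanNorm

section Symbols

variable {E F : Type*} [NormedAddCommGroup E] [NormedSpace ℝ E]
  [NormedAddCommGroup F] [NormedSpace ℝ F]

/-- `q` is a first-order conic symbol of order `-ν` on the end `(1, ∞) × B`: it is `O(r ^ (-ν))`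
there, transversal derivatives preserve this rate, and a radial derivative gains a factor `r⁻¹`.
Both derivative bounds are encoded at once by measuring the tangent vector `(σ, v)` at radius `r`
with `|σ| / r + ‖v‖`. -/
def IsSymbolOn (q : ℝ × E → ℝ) (ν : ℝ) (B : Set E) : Prop :=
  ∃ C ≥ 0, ∀ r > 1, ∀ x ∈ B, DifferentiableAt ℝ q (r, x) ∧ |q (r, x)| ≤ C * r ^ (-ν) ∧
    ∀ σ v, |fderiv ℝ q (r, x) (σ, v)| ≤ C * r ^ (-ν) * (|σ| / r + ‖v‖)

namespace IsSymbolOn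

variable {q q' : ℝ × E → ℝ} {ν ν' : ℝ} {B : Set E}

lemma differentiableAt (h : IsSymbolOn q ν B) {r : ℝ} (hr : 1 < r) {x : E} (hx : x ∈ B) :
    DifferentiableAt ℝ q (r, x) := by
  obtain ⟨C, -, h⟩ := h
  exact (h r hr x hx).1

lemma weaken (h : IsSymbolOn q ν B) (hν : ν' ≤ ν) : IsSymbolOn q ν' B := by
  obtain ⟨C, hC, h⟩ := h
  refine ⟨C, hC, fun r hr x hx => ?_⟩
  obtain ⟨hd, hq, hdq⟩ := h r hr x hx
  have : 0 < r := one_pos.trans hr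
  have hpow : r ^ (-ν) ≤ r ^ (-ν') := Real.rpow_le_rpow_of_exponent_le hr.le (neg_le_neg hν)
  exact ⟨hd, hq.trans (by gcongr), fun σ v => (hdq σ v).trans (by gcongr)⟩

lemma zero (ν : ℝ) (B : Set E) : IsSymbolOn (fun _ => 0) ν B :=
  ⟨0, le_rfl, fun _ _ _ _ => ⟨differentiableAt_const _, by simp, by simp⟩⟩

lemma add (h : IsSymbolOn q ν B) (h' : IsSymbolOn q' ν B) :
    IsSymbolOn (fun z => q z + q' z) ν B := by
  obtain ⟨C, hC, h⟩ := h
  obtain ⟨C', hC', h'⟩ := h'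
  refine ⟨C + C', add_nonneg hC hC', fun r hr x hx => ?_⟩
  obtain ⟨hd, hq, hdq⟩ := h r hr x hx
  obtain ⟨hd', hq', hdq'⟩ := h' r hr x hx
  refine ⟨hd.add hd', ?_, fun σ v => ?_⟩
  · rw [add_mul]
    exact (abs_add_le _ _).trans (add_le_add hq hq')
  · rw [fderiv_fun_add hd hd', add_apply, add_mul, add_mul]
    exact (abs_add_le _ _).trans (add_le_add (hdq σ v) (hdq' σ v))

lemma sum {ι : Type*} {q : ι → ℝ × E → ℝ} (s : Finset ι) (h : ∀ i, IsSymbolOn (q i) ν B) :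
    IsSymbolOn (fun z => ∑ i ∈ s, q i z) ν B := by
  classical
  induction s using Finset.induction_on with
  | empty => simpa using zero ν B
  | insert i s hi ih =>
    simp only [Finset.sum_insert hi]
    exact (h i).add ih

lemma mul (h : IsSymbolOn q ν B) (h' : IsSymbolOn q' ν' B) :
    IsSymbolOn (fun z => q z * q' z) (ν + ν') B := by
  obtain ⟨C, hC, h⟩ := h
  obtain ⟨C', hC', h'⟩ := h'
  refine ⟨2 * (C * C'), by positivity, fun r hr x hx => ?_⟩
  obtain ⟨hd, hq, hdq⟩ := h r hr x hx
  obtain ⟨hd', hq', hdq'⟩ := h' r hr x hx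
  have hr₀ : 0 < r := one_pos.trans hr
  rw [neg_add, Real.rpow_add hr₀]
  refine ⟨hd.mul hd', ?_, fun σ v => ?_⟩
  · calc |q (r, x) * q' (r, x)| ≤ (C * r ^ (-ν)) * (C' * r ^ (-ν')) := by
          rw [abs_mul]
          gcongr
      _ = C * C' * (r ^ (-ν) * r ^ (-ν')) := by ring
      _ ≤ 2 * (C * C') * (r ^ (-ν) * r ^ (-ν')) := by
          gcongr ?_ * _
          linarith [mul_nonneg hC hC']
  · calc |fderiv ℝ (fun z => q z * q' z) (r, x) (σ, v)|
        = |q (r, x) * fderiv ℝ q' (r, x) (σ, v) + q' (r, x) * fderiv ℝ q (r, x) (σ, v)| := by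
          rw [fderiv_fun_mul hd hd', add_apply, smul_apply, smul_apply, smul_eq_mul, smul_eq_mul]
      _ ≤ (C * r ^ (-ν)) * (C' * r ^ (-ν') * (|σ| / r + ‖v‖))
          + (C' * r ^ (-ν')) * (C * r ^ (-ν) * (|σ| / r + ‖v‖)) := by
          refine (abs_add_le _ _).trans ?_
          rw [abs_mul, abs_mul]
          gcongr
          exacts [hdq' σ v, hdq σ v]
      _ = 2 * (C * C') * (r ^ (-ν) * r ^ (-ν')) * (|σ| / r + ‖v‖) := by ring

lemma inv_fst (B : Set E) : IsSymbolOn (fun z => z.1⁻¹) 1 B := by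
  refine ⟨1, zero_le_one, fun r hr x _ => ?_⟩
  have hr₀ : 0 < r := one_pos.trans hr
  have hinv : HasFDerivAt (fun z : ℝ × E => z.1⁻¹)
      (-(r ^ 2)⁻¹ • ContinuousLinearMap.fst ℝ ℝ E) (r, x) :=
    (hasDerivAt_inv hr₀.ne').comp_hasFDerivAt (r, x) hasFDerivAt_fst
  refine ⟨hinv.differentiableAt, ?_, fun σ v => ?_⟩
  · rw [Real.rpow_neg_one, one_mul, abs_of_pos (inv_pos.2 hr₀)]
  · calc |fderiv ℝ (fun z : ℝ × E => z.1⁻¹) (r, x) (σ, v)| = r⁻¹ * (|σ| / r) := by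
          rw [hinv.fderiv, smul_apply, ContinuousLinearMap.coe_fst', smul_eq_mul, abs_mul, abs_neg,
            abs_of_pos (by positivity)]
          field_simp
      _ ≤ 1 * r ^ (-1 : ℝ) * (|σ| / r + ‖v‖) := by
          rw [Real.rpow_neg_one, one_mul]
          gcongr
          exact le_add_of_nonneg_right (norm_nonneg v)

lemma of_contDiffOn_snd {g : E → ℝ} {V : Set E} (hV : IsOpen V) (hg : ContDiffOn ℝ 1 g V)
    (hB : IsCompact B) (hBV : B ⊆ V) : IsSymbolOn (fun z => g z.2) 0 B := by
  obtain ⟨C, hC⟩ := hB.exists_bound_of_continuousOn (hg.continuousOn.mono hBV)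
  obtain ⟨D, hD⟩ := hB.exists_bound_of_continuousOn
    ((hg.continuousOn_fderiv_of_isOpen hV le_rfl).mono hBV)
  refine ⟨max 0 (max C D), le_max_left _ _, fun r hr x hx => ?_⟩
  have : 0 < r := one_pos.trans hr
  have hgx : DifferentiableAt ℝ g x :=
    (hg.differentiableOn one_ne_zero).differentiableAt (hV.mem_nhds (hBV hx))
  have hcomp : HasFDerivAt (fun z : ℝ × E => g z.2)
      ((fderiv ℝ g x).comp (ContinuousLinearMap.snd ℝ ℝ E)) (r, x) :=
    HasFDerivAt.comp (f := Prod.snd) (r, x) hgx.hasFDerivAt hasFDerivAt_snd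
  rw [neg_zero, Real.rpow_zero, mul_one]
  refine ⟨hcomp.differentiableAt, (hC x hx).trans (by simp), fun σ v => ?_⟩
  calc |fderiv ℝ (fun z : ℝ × E => g z.2) (r, x) (σ, v)| = ‖fderiv ℝ g x v‖ := by
        rw [hcomp.fderiv]
        rfl
    _ ≤ D * ‖v‖ := (fderiv ℝ g x).le_of_opNorm_le (hD x hx) v
    _ ≤ max 0 (max C D) * (|σ| / r + ‖v‖) := by
        gcongr
        · simp
        · exact le_add_of_nonneg_left (by positivity)

lemma comp_fst (h : IsSymbolOn q ν B) (T : Set F) :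
    IsSymbolOn (fun z : ℝ × E × F => q (z.1, z.2.1)) ν (B ×ˢ T) := by
  obtain ⟨C, hC, h⟩ := h
  refine ⟨C, hC, fun r hr x hx => ?_⟩
  obtain ⟨hd, hq, hdq⟩ := h r hr x.1 hx.1
  have : 0 < r := one_pos.trans hr
  have hcomp : HasFDerivAt (fun z : ℝ × E × F => q (z.1, z.2.1))
      ((fderiv ℝ q (r, x.1)).comp ((ContinuousLinearMap.fst ℝ ℝ (E × F)).prod
        ((ContinuousLinearMap.fst ℝ E F).comp (ContinuousLinearMap.snd ℝ ℝ (E × F))))) (r, x) :=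
    HasFDerivAt.comp (f := fun z : ℝ × E × F => (z.1, z.2.1)) (r, x) hd.hasFDerivAt
      (hasFDerivAt_fst.prodMk (hasFDerivAt_fst.comp _ hasFDerivAt_snd))
  refine ⟨hcomp.differentiableAt, hq, fun σ v => ?_⟩
  calc |fderiv ℝ (fun z : ℝ × E × F => q (z.1, z.2.1)) (r, x) (σ, v)|
      = |fderiv ℝ q (r, x.1) (σ, v.1)| := by
        rw [hcomp.fderiv]
        rfl
    _ ≤ C * r ^ (-ν) * (|σ| / r + ‖v.1‖) := hdq σ v.1
    _ ≤ C * r ^ (-ν) * (|σ| / r + ‖v‖) := by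
        gcongr
        exact norm_fst_le v

lemma exists_abs_fderiv_le (h : IsSymbolOn q ν B) (hν : 0 ≤ ν) {a : ℝ} (ha : 0 < a) :
    ∃ C ≥ 0, ∀ s > 0, ∀ r > 1, a * s ≤ r → ∀ x ∈ B, ∀ σ v,
      |fderiv ℝ q (r, x) (σ, v)| ≤ C * s ^ (-ν) * (|σ| / s + ‖v‖) := by
  obtain ⟨C, hC, h⟩ := h
  refine ⟨C * a ^ (-ν) * (a⁻¹ + 1), by positivity, fun s hs r hr har x hx σ v => ?_⟩
  have : 0 < r := one_pos.trans hr
  have hpow : r ^ (-ν) ≤ a ^ (-ν) * s ^ (-ν) := by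
    rw [← Real.mul_rpow ha.le hs.le]
    exact Real.rpow_le_rpow_of_nonpos (by positivity) har (neg_nonpos.2 hν)
  have hlength : |σ| / r + ‖v‖ ≤ (a⁻¹ + 1) * (|σ| / s + ‖v‖) := by
    have hσ : |σ| / r ≤ a⁻¹ * (|σ| / s) := by
      calc |σ| / r ≤ |σ| / (a * s) := by gcongr
        _ = a⁻¹ * (|σ| / s) := by field_simp
    have hv : 0 ≤ a⁻¹ * ‖v‖ := by positivity
    have hσ₀ : 0 ≤ |σ| / s := by positivity
    linarith
  calc |fderiv ℝ q (r, x) (σ, v)| ≤ C * r ^ (-ν) * (|σ| / r + ‖v‖) := (h r hr x hx).2.2 σ v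
    _ ≤ C * (a ^ (-ν) * s ^ (-ν)) * ((a⁻¹ + 1) * (|σ| / s + ‖v‖)) := by gcongr
    _ = C * a ^ (-ν) * (a⁻¹ + 1) * s ^ (-ν) * (|σ| / s + ‖v‖) := by ring

end IsSymbolOn

end Symbols

section AngularCoefficients

variable {m : ℕ}

lemma fderiv_uncurry_apply {f : ℝ → (Fin m → ℝ) → ℝ} {r : ℝ} {θ : Fin m → ℝ}
    (hf : DifferentiableAt ℝ (fun z : ℝ × (Fin m → ℝ) => f z.1 z.2) (r, θ))
    (σ : ℝ) (v : Fin m → ℝ) :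
    fderiv ℝ (fun z : ℝ × (Fin m → ℝ) => f z.1 z.2) (r, θ) (σ, v)
      = σ * pderivR f r θ + ∑ j, v j * pderivTheta j f r θ := by
  have hradial : pderivR f r θ
      = fderiv ℝ (fun z : ℝ × (Fin m → ℝ) => f z.1 z.2) (r, θ) (1, 0) :=
    (hf.hasFDerivAt.comp_hasDerivAt (f := fun s => (s, θ)) r
      ((hasDerivAt_id r).prodMk (hasDerivAt_const r θ))).deriv
  have hangular : fderiv ℝ (f r) θ
      = (fderiv ℝ (fun z : ℝ × (Fin m → ℝ) => f z.1 z.2) (r, θ)).comp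
        (ContinuousLinearMap.inr ℝ ℝ (Fin m → ℝ)) :=
    (hf.hasFDerivAt.comp (f := fun θ' => (r, θ')) θ (hasFDerivAt_prodMk_right r θ)).fderiv
  have hsplit : ((σ, v) : ℝ × (Fin m → ℝ)) = σ • (1, 0) + (0, v) := by simp
  rw [hsplit, map_add, map_smul, ← hradial, smul_eq_mul, add_right_inj]
  calc fderiv ℝ (fun z : ℝ × (Fin m → ℝ) => f z.1 z.2) (r, θ) (0, v) = fderiv ℝ (f r) θ v := by
        rw [hangular]
        rfl
    _ = ∑ j, v j * pderivTheta j f r θ := by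
        conv_lhs => rw [pi_eq_sum_univ' v]
        simp [pderivTheta, Pi.single]

lemma IsSymbolOn.of_decayOn {f : ℝ → (Fin m → ℝ) → ℝ} {ν : ℝ} {U K : Set (Fin m → ℝ)}
    (hU : IsOpen U)
    (hf : DifferentiableOn ℝ (fun z : ℝ × (Fin m → ℝ) => f z.1 z.2) (Ioi (1 : ℝ) ×ˢ U))
    (hKU : K ⊆ U) (h : DecayOn f ν 1 K) :
    IsSymbolOn (fun z : ℝ × (Fin m → ℝ) => f z.1 z.2) ν K := by
  obtain ⟨C₀, hC₀, hvalue⟩ := h 0 []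
  obtain ⟨C₁, hC₁, hradial⟩ := h 1 []
  choose D hD hangular using fun j => h 0 [j]
  simp only [thetaDerivs, List.foldr_nil, List.foldr_cons, Function.iterate_zero, id_eq,
    Function.iterate_one, Nat.cast_zero, Nat.cast_one, sub_zero] at hvalue hradial hangular
  have hsum : 0 ≤ ∑ j, D j := Finset.sum_nonneg fun j _ => (hD j).le
  refine ⟨C₀ + C₁ + ∑ j, D j, by positivity, fun r hr θ hθ => ?_⟩
  have hr₀ : 0 < r := one_pos.trans hr
  have hd : DifferentiableAt ℝ (fun z : ℝ × (Fin m → ℝ) => f z.1 z.2) (r, θ) :=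
    hf.differentiableAt ((isOpen_Ioi.prod hU).mem_nhds ⟨hr, hKU hθ⟩)
  refine ⟨hd, (hvalue r hr θ hθ).trans (by gcongr; linarith), fun σ v => ?_⟩
  have hσ : |σ * pderivR f r θ| ≤ C₁ * r ^ (-ν) * (|σ| / r) := by
    calc |σ * pderivR f r θ| ≤ |σ| * (C₁ * r ^ (-ν - 1)) := by
          rw [abs_mul]
          gcongr
          exact hradial r hr θ hθ
      _ = C₁ * r ^ (-ν) * (|σ| / r) := by
          rw [Real.rpow_sub_one hr₀.ne']
          ring
  have hv : |∑ j, v j * pderivTheta j f r θ| ≤ (∑ j, D j) * r ^ (-ν) * ‖v‖ := by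
    rw [Finset.sum_mul, Finset.sum_mul]
    refine (Finset.abs_sum_le_sum_abs _ _).trans (Finset.sum_le_sum fun j _ => ?_)
    rw [abs_mul, mul_comm]
    exact mul_le_mul (hangular j r hr θ hθ) (norm_le_pi_norm v j) (abs_nonneg _)
      ((abs_nonneg _).trans (hangular j r hr θ hθ))
  rw [fderiv_uncurry_apply hd]
  calc |σ * pderivR f r θ + ∑ j, v j * pderivTheta j f r θ|
      ≤ C₁ * r ^ (-ν) * (|σ| / r) + (∑ j, D j) * r ^ (-ν) * ‖v‖ :=
        (abs_add_le _ _).trans (add_le_add hσ hv)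
    _ ≤ (C₀ + C₁ + ∑ j, D j) * r ^ (-ν) * (|σ| / r)
        + (C₀ + C₁ + ∑ j, D j) * r ^ (-ν) * ‖v‖ := by
        gcongr <;> linarith
    _ = (C₀ + C₁ + ∑ j, D j) * r ^ (-ν) * (|σ| / r + ‖v‖) := by ring

end AngularCoefficients

section PhasePartials

variable {m : ℕ} {p : ℝ → (Fin m → ℝ) → ℝ → (Fin m → ℝ) → ℝ} {r : ℝ} {θ : Fin m → ℝ} {ρ : ℝ}
  {ω : Fin m → ℝ}

/-- A function of the four phase variables as a function on phase space, whose total derivative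
collects the partial derivatives `pdR`, `pdTheta`, `pdRho` and `pdOmega`. -/
def onPhase (p : ℝ → (Fin m → ℝ) → ℝ → (Fin m → ℝ) → ℝ) (z : Phase m) : ℝ :=
  p z.1 z.2.1 z.2.2.1 z.2.2.2

lemma pdR_eq_fderiv (h : DifferentiableAt ℝ (onPhase p) (r, θ, ρ, ω)) :
    pdR p r θ ρ ω = fderiv ℝ (onPhase p) (r, θ, ρ, ω) (1, 0, 0, 0) :=
  (h.hasFDerivAt.comp_hasDerivAt (f := fun s => (s, θ, ρ, ω)) r
    ((hasDerivAt_id r).prodMk (hasDerivAt_const r (θ, ρ, ω)))).deriv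

lemma pdRho_eq_fderiv (h : DifferentiableAt ℝ (onPhase p) (r, θ, ρ, ω)) :
    pdRho p r θ ρ ω = fderiv ℝ (onPhase p) (r, θ, ρ, ω) (0, 0, 1, 0) :=
  (h.hasFDerivAt.comp_hasDerivAt (f := fun s => (r, θ, s, ω)) ρ
    ((hasDerivAt_const ρ r).prodMk ((hasDerivAt_const ρ θ).prodMk
      ((hasDerivAt_id ρ).prodMk (hasDerivAt_const ρ ω))))).deriv

lemma pdTheta_eq_fderiv (j : Fin m) (h : DifferentiableAt ℝ (onPhase p) (r, θ, ρ, ω)) :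
    pdTheta p j r θ ρ ω = fderiv ℝ (onPhase p) (r, θ, ρ, ω) (0, Pi.single j 1, 0, 0) :=
  congrArg (fun L => L (Pi.single j 1))
    (h.hasFDerivAt.comp (f := fun θ' => (r, θ', ρ, ω)) θ
      ((hasFDerivAt_const r θ).prodMk
        ((hasFDerivAt_id θ).prodMk (hasFDerivAt_const (ρ, ω) θ)))).fderiv

lemma pdOmega_eq_fderiv (j : Fin m) (h : DifferentiableAt ℝ (onPhase p) (r, θ, ρ, ω)) :
    pdOmega p j r θ ρ ω = fderiv ℝ (onPhase p) (r, θ, ρ, ω) (0, 0, 0, Pi.single j 1) :=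
  congrArg (fun L => L (Pi.single j 1))
    (h.hasFDerivAt.comp (f := fun ω' => (r, θ, ρ, ω')) ω
      ((hasFDerivAt_const r ω).prodMk ((hasFDerivAt_const θ ω).prodMk
        ((hasFDerivAt_const ρ ω).prodMk (hasFDerivAt_id ω))))).fderiv

end PhasePartials

namespace Coeffs

variable {m : ℕ} {μ : ℝ} {U K : Set (Fin m → ℝ)}

/-- The part `p - ρ ^ 2` of the energy, which decays at infinity together with its first
derivatives, as a function on phase space. -/
noncomputable def interaction (c : Coeffs m μ U) (z : Phase m) : ℝ :=
  onPhase c.p z - z.2.2.1 ^ 2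

lemma interaction_apply (c : Coeffs m μ U) (z : Phase m) :
    c.interaction z = (∑ j, ∑ k, c.hM z.2.1 j k * z.2.2.2 j * z.2.2.2 k) * (z.1⁻¹ * z.1⁻¹)
      + c.a0 z.1 z.2.1 * z.2.2.1 ^ 2
      + (∑ j, c.a1 z.1 z.2.1 j * (z.2.2.1 * z.2.2.2 j)) * z.1⁻¹
      + (∑ j, ∑ k, c.a2 z.1 z.2.1 j k * (z.2.2.2 j * z.2.2.2 k)) * (z.1⁻¹ * z.1⁻¹) := by
  simp only [interaction, onPhase, p, energy, div_eq_mul_inv, pow_two, mul_inv, mul_assoc]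
  ring

lemma isSymbolOn_metric (c : Coeffs m μ U) (hU : IsOpen U) (hK : IsCompact K) (hKU : K ⊆ U)
    {T : Set (ℝ × (Fin m → ℝ))} (hT : IsCompact T) :
    IsSymbolOn (fun z : Phase m => ∑ j, ∑ k, c.hM z.2.1 j k * z.2.2.2 j * z.2.2.2 k) 0
      (K ×ˢ T) := by
  refine .of_contDiffOn_snd (g := fun x => ∑ j, ∑ k, c.hM x.1 j k * x.2.2 j * x.2.2 k)
    (hU.prod isOpen_univ) ?_ (hK.prod hT) (prod_mono hKU (subset_univ _))
  refine ContDiffOn.sum fun j _ => ContDiffOn.sum fun k _ => ?_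
  have hjk : ContDiffOn ℝ 1 (fun x : (Fin m → ℝ) × ℝ × (Fin m → ℝ) => c.hM x.1 j k)
      (U ×ˢ univ) :=
    ((c.hM_smooth j k).of_le (by simp)).comp contDiffOn_fst fun x hx => hx.1
  exact (hjk.mul (by fun_prop)).mul (by fun_prop)

lemma isSymbolOn_interaction (c : Coeffs m μ U) (hU : IsOpen U) (hK : IsCompact K) (hKU : K ⊆ U)
    {T : Set (ℝ × (Fin m → ℝ))} (hT : IsCompact T) :
    IsSymbolOn c.interaction (min (1 + μ) 2) (K ×ˢ T) := by
  have hle_left := min_le_left (1 + μ) 2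
  have hle_right := min_le_right (1 + μ) 2
  have hinv : IsSymbolOn (fun z : Phase m => z.1⁻¹) 1 (K ×ˢ T) := .inv_fst _
  have hinv_sq := hinv.mul hinv
  have hpolynomial {g : (Fin m → ℝ) × ℝ × (Fin m → ℝ) → ℝ} (hg : ContDiff ℝ 1 g) :
      IsSymbolOn (fun z : Phase m => g z.2) 0 (K ×ˢ T) :=
    .of_contDiffOn_snd isOpen_univ hg.contDiffOn (hK.prod hT) (subset_univ _)
  have hcoeff {f : ℝ → (Fin m → ℝ) → ℝ} {ν : ℝ}
      (hf : ContDiffOn ℝ (⊤ : ℕ∞) (fun z : ℝ × (Fin m → ℝ) => f z.1 z.2) (Ioi (1 : ℝ) ×ˢ U))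
      (hdecay : DecayOn f ν 1 K) : IsSymbolOn (fun z : Phase m => f z.1 z.2.1) ν (K ×ˢ T) :=
    (IsSymbolOn.of_decayOn hU (hf.differentiableOn (by simp)) hKU hdecay).comp_fst T
  rw [funext c.interaction_apply]
  refine .add (.add (.add ?_ ?_) ?_) ?_
  · exact ((c.isSymbolOn_metric hU hK hKU hT).mul hinv_sq).weaken (by linarith)
  · exact ((hcoeff c.a0_smooth (c.a0_decay K hK hKU)).mul
      (hpolynomial (g := fun x => x.2.1 ^ 2) (by fun_prop))).weaken (by linarith)
  · refine ((IsSymbolOn.sum (ν := μ + 0) _ fun j => ?_).mul hinv).weaken (by linarith)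
    exact (hcoeff (c.a1_smooth j) (c.a1_decay K hK hKU j)).mul
      (hpolynomial (g := fun x => x.2.1 * x.2.2 j) (by fun_prop))
  · refine ((IsSymbolOn.sum (ν := μ + 0) _ fun j => .sum _ fun k => ?_).mul hinv_sq).weaken
      (by linarith)
    exact (hcoeff (c.a2_smooth j k) (c.a2_decay K hK hKU j k)).mul
      (hpolynomial (g := fun x => x.2.2 j * x.2.2 k) (by fun_prop))

lemma hasFDerivAt_onPhase (c : Coeffs m μ U) {z : Phase m}
    (h : DifferentiableAt ℝ c.interaction z) :
    HasFDerivAt (onPhase c.p)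
      ((2 * z.2.2.1) • ((ContinuousLinearMap.fst ℝ ℝ (Fin m → ℝ)).comp
        ((ContinuousLinearMap.snd ℝ (Fin m → ℝ) _).comp (ContinuousLinearMap.snd ℝ ℝ _)))
        + fderiv ℝ c.interaction z) z := by
  have hρ : HasFDerivAt (fun z : Phase m => z.2.2.1)
      ((ContinuousLinearMap.fst ℝ ℝ (Fin m → ℝ)).comp
        ((ContinuousLinearMap.snd ℝ (Fin m → ℝ) _).comp (ContinuousLinearMap.snd ℝ ℝ _))) z :=
    hasFDerivAt_fst.comp z (hasFDerivAt_snd.comp z hasFDerivAt_snd)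
  refine ((hρ.pow 2).add h.hasFDerivAt).congr_fderiv ?_ |>.congr_of_eventuallyEq ?_
  · simp
  · exact .of_forall fun z => by simp [interaction]

lemma differentiableAt_onPhase (c : Coeffs m μ U) (hU : IsOpen U) {z : Phase m} (hr : 1 < z.1)
    (hθ : z.2.1 ∈ U) : DifferentiableAt ℝ (onPhase c.p) z :=
  (c.hasFDerivAt_onPhase ((c.isSymbolOn_interaction hU isCompact_singleton
    (singleton_subset_iff.2 hθ) isCompact_singleton).differentiableAt hr
      (mk_mem_prod rfl rfl))).differentiableAt

lemma exists_abs_fderiv_onPhase_sub_le (c : Coeffs m μ U) (hμ : μ ∈ Icc (-1 : ℝ) 1)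
    (hU : IsOpen U) (hK : IsCompact K) (hKU : K ⊆ U) {T : Set (ℝ × (Fin m → ℝ))}
    (hT : IsCompact T) {a : ℝ} (ha : 0 < a) :
    ∃ C ≥ 0, ∀ s > 0, ∀ z z' : Phase m, 1 < z.1 → 1 < z'.1 → z.2 ∈ K ×ˢ T → z'.2 ∈ K ×ˢ T →
      a * s ≤ z.1 → a * s ≤ z'.1 →
      ∀ w : Phase m, |fderiv ℝ (onPhase c.p) z' w - fderiv ℝ (onPhase c.p) z w|
        ≤ 2 * |z'.2.2.1 - z.2.2.1| * |w.2.2.1| + C * s ^ (-1 - μ) * (|w.1| / s + ‖w.2‖) := by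
  have hsymbol : IsSymbolOn c.interaction (1 + μ) (K ×ˢ T) :=
    (c.isSymbolOn_interaction hU hK hKU hT).weaken (le_min le_rfl (by linarith [hμ.2]))
  obtain ⟨C, hC, hbound⟩ := hsymbol.exists_abs_fderiv_le (by linarith [hμ.1]) ha
  refine ⟨2 * C, by positivity, fun s hs z z' hz hz' hx hx' hr hr' w => ?_⟩
  have hzw := hbound s hs z.1 hz hr z.2 hx w.1 w.2
  have hzw' := hbound s hs z'.1 hz' hr' z'.2 hx' w.1 w.2
  rw [(c.hasFDerivAt_onPhase (hsymbol.differentiableAt hz hx)).fderiv,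
    (c.hasFDerivAt_onPhase (hsymbol.differentiableAt hz' hx')).fderiv]
  rw [neg_add'] at hzw hzw'
  calc |2 * z'.2.2.1 * w.2.2.1 + fderiv ℝ c.interaction z' w
        - (2 * z.2.2.1 * w.2.2.1 + fderiv ℝ c.interaction z w)|
      = |2 * (z'.2.2.1 - z.2.2.1) * w.2.2.1
        + (fderiv ℝ c.interaction z' w - fderiv ℝ c.interaction z w)| := by ring_nf
    _ ≤ |2 * (z'.2.2.1 - z.2.2.1) * w.2.2.1|
        + (|fderiv ℝ c.interaction z' w| + |fderiv ℝ c.interaction z w|) :=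
        (abs_add_le _ _).trans (by gcongr; exact abs_sub _ _)
    _ ≤ 2 * |z'.2.2.1 - z.2.2.1| * |w.2.2.1|
        + 2 * C * s ^ (-1 - μ) * (|w.1| / s + ‖w.2‖) := by
        rw [abs_mul, abs_mul, abs_two]
        linarith

lemma exists_partials_sub_le (c : Coeffs m μ U) (hμ : μ ∈ Icc (-1 : ℝ) 1) (hU : IsOpen U)
    (hK : IsCompact K) (hKU : K ⊆ U) {T : Set (ℝ × (Fin m → ℝ))} (hT : IsCompact T) {a : ℝ}
    (ha : 0 < a) :
    ∃ C > 0, ∀ s > 0, ∀ r θ ρ ω r' θ' ρ' ω', 1 < r → 1 < r' → a * s ≤ r → a * s ≤ r' →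
      θ ∈ K → θ' ∈ K → (ρ, ω) ∈ T → (ρ', ω') ∈ T →
      |pdRho c.p r' θ' ρ' ω' - pdRho c.p r θ ρ ω| ≤ 2 * |ρ' - ρ| + C * s ^ (-(1 : ℝ) - μ) ∧
      eNorm (fun j => pdOmega c.p j r' θ' ρ' ω' - pdOmega c.p j r θ ρ ω)
        ≤ C * s ^ (-(1 : ℝ) - μ) ∧
      |pdR c.p r' θ' ρ' ω' - pdR c.p r θ ρ ω| ≤ C * s ^ (-(2 : ℝ) - μ) ∧
      eNorm (fun j => pdTheta c.p j r' θ' ρ' ω' - pdTheta c.p j r θ ρ ω)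
        ≤ C * s ^ (-(1 : ℝ) - μ) := by
  obtain ⟨C, hC, hdev⟩ := c.exists_abs_fderiv_onPhase_sub_le hμ hU hK hKU hT ha
  refine ⟨(1 + √m) * C + 1, by positivity,
    fun s hs r θ ρ ω r' θ' ρ' ω' hr hr' har har' hθ hθ' hξ hξ' => ?_⟩
  have hd := c.differentiableAt_onPhase (z := (r, θ, ρ, ω)) hU hr (hKU hθ)
  have hd' := c.differentiableAt_onPhase (z := (r', θ', ρ', ω')) hU hr' (hKU hθ')
  have hdev := hdev s hs (r, θ, ρ, ω) (r', θ', ρ', ω') hr hr' ⟨hθ, hξ⟩ ⟨hθ', hξ'⟩ har har'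
  have hscalar : C ≤ (1 + √m) * C + 1 := by nlinarith [mul_nonneg (Real.sqrt_nonneg m) hC]
  have hvector {v : Fin m → ℝ} (hv : ∀ j, |v j| ≤ C * s ^ (-(1 : ℝ) - μ)) :
      eNorm v ≤ ((1 + √m) * C + 1) * s ^ (-(1 : ℝ) - μ) := by
    refine (eNorm_le_sqrt_mul (by positivity) hv).trans ?_
    rw [← mul_assoc]
    gcongr
    linarith
  refine ⟨?_, hvector fun j => ?_, ?_, hvector fun j => ?_⟩
  · rw [pdRho_eq_fderiv hd, pdRho_eq_fderiv hd']
    refine (hdev (0, 0, 1, 0)).trans ?_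
    simp only [abs_one, mul_one, abs_zero, zero_div, zero_add, Prod.norm_mk, norm_zero, norm_one,
      max_eq_left zero_le_one, max_eq_right zero_le_one]
    gcongr
  · rw [pdOmega_eq_fderiv j hd, pdOmega_eq_fderiv j hd']
    simpa [Prod.norm_mk, Pi.norm_single] using hdev (0, 0, 0, Pi.single j 1)
  · rw [pdR_eq_fderiv hd, pdR_eq_fderiv hd', show -(2 : ℝ) - μ = -1 - μ - 1 by ring,
      Real.rpow_sub_one hs.ne', ← mul_div_assoc]
    refine (hdev (1, 0, 0, 0)).trans ?_
    simp only [abs_one, abs_zero, mul_zero, zero_add, Prod.norm_mk, norm_zero, max_self, add_zero,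
      mul_one_div]
    gcongr
  · rw [pdTheta_eq_fderiv j hd, pdTheta_eq_fderiv j hd']
    simpa [Prod.norm_mk, Pi.norm_single] using hdev (0, Pi.single j 1, 0, 0)

end Coeffs

theorem statement_14_general {m : ℕ} {μ : ℝ} (hμ : μ ∈ Icc (-1 : ℝ) 1) {U : Set (Fin m → ℝ)}
    (hU : IsOpen U) (c : Coeffs m μ U) {K : Set (Fin m → ℝ)} (hK : IsCompact K) (hKU : K ⊆ U)
    {c₀ : ℝ} (hc₀ : 0 < c₀) (C₀ : ℝ) :
    ∃ δ' > (0 : ℝ), ∃ C₁ > (0 : ℝ), ∀ s > (0 : ℝ), ∀ r θ ρ ω,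
      1 < r ∧ θ ∈ K ∧ |ρ| ≤ C₀ ∧ eNorm ω ≤ C₀ ∧ r ≥ c₀ * s →
      ∀ δ₀ < δ', ∀ r' θ' ρ' ω', 1 < r' → |r' - r| ≤ 10 * δ₀ * s →
        eNorm (θ' - θ) ≤ 2 * δ₀ → |ρ' - ρ| ≤ 2 * δ₀ → eNorm (ω' - ω) ≤ 2 * δ₀ →
        |pdRho c.p r' θ' ρ' ω' - pdRho c.p r θ ρ ω| ≤ 4 * δ₀ + C₁ * s ^ (-(1 : ℝ) - μ) ∧
        eNorm (fun j => pdOmega c.p j r' θ' ρ' ω' - pdOmega c.p j r θ ρ ω)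
          ≤ C₁ * s ^ (-(1 : ℝ) - μ) ∧
        |pdR c.p r' θ' ρ' ω' - pdR c.p r θ ρ ω| ≤ C₁ * s ^ (-(2 : ℝ) - μ) ∧
        eNorm (fun j => pdTheta c.p j r' θ' ρ' ω' - pdTheta c.p j r θ ρ ω)
          ≤ C₁ * s ^ (-(1 : ℝ) - μ) := by
  obtain ⟨ε, hε, hεU⟩ := hK.exists_cthickening_subset_open hU hKU
  obtain ⟨C₁, hC₁, hdev⟩ := c.exists_partials_sub_le hμ hU hK.cthickening hεU
    (isCompact_closedBall (0 : ℝ × (Fin m → ℝ)) (2 + C₀)) (half_pos hc₀)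
  refine ⟨min (min 1 (ε / 2)) (c₀ / 20), by positivity, C₁, hC₁, ?_⟩
  rintro s hs r θ ρ ω ⟨hr, hθ, hρ, hω, hrs⟩ δ₀ hδ₀ r' θ' ρ' ω' hr' hrr' hθθ' hρρ' hωω'
  simp only [lt_min_iff] at hδ₀
  obtain ⟨⟨hδ₁, hδε⟩, hδc⟩ := hδ₀
  have hr_lower : c₀ / 2 * s ≤ r := by nlinarith
  have hr'_lower : c₀ / 2 * s ≤ r' := by nlinarith [(abs_le.1 hrr').1]
  have hξ : (ρ, ω) ∈ Metric.closedBall (0 : ℝ × (Fin m → ℝ)) C₀ :=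
    mk_mem_closedBall_of_eNorm_sub_le (by simpa using hρ) (by simpa using hω)
  have hξ' : (ρ', ω') ∈ Metric.closedBall (0 : ℝ × (Fin m → ℝ)) (2 + C₀) :=
    (dist_triangle _ (ρ, ω) _).trans (add_le_add (mk_mem_closedBall_of_eNorm_sub_le
      (hρρ'.trans (by linarith)) (hωω'.trans (by linarith))) hξ)
  obtain ⟨hdevρ, hdevω, hdevr, hdevθ⟩ := hdev s hs r θ ρ ω r' θ' ρ' ω' hr hr' hr_lower hr'_lower
    (Metric.self_subset_cthickening K hθ) (mem_cthickening_of_eNorm_sub_le hθ (by linarith))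
    (Metric.closedBall_subset_closedBall (by linarith) hξ) hξ'
  exact ⟨by linarith, hdevω, hdevr, hdevθ⟩

/-- Deviation estimates along the trajectory tube. In the tube
`|r - r(t)| ≤ 10δ₀|t+T₀|`, `|θ - θ(t)| ≤ 2δ₀`, `|ρ - ρ(t)| ≤ 2δ₀`, `|ω - ω(t)| ≤ 2δ₀`
around a backward trajectory, the partial derivatives of `p` deviate from their values
along the trajectory by the stated amounts. -/
theorem statement_14 {m : ℕ} (hm : 1 ≤ m) {μ : ℝ} (hμ : μ ∈ Ioo (0:ℝ) 1)
    {U : Set (Fin m → ℝ)} (hU : IsOpen U) (c : Coeffs m μ U)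
    (K : Set (Fin m → ℝ)) (hK : IsCompact K) (hKU : K ⊆ U)
    (c₀ C₀ : ℝ) (hc₀ : 0 < c₀) (hC₀ : 0 < C₀) :
    ∃ δ' > (0:ℝ), ∃ C₁ > (0:ℝ), ∃ T₁ < (0:ℝ), ∀ T₀ ≤ T₁,
      ∀ (r : ℝ → ℝ) (θ : ℝ → Fin m → ℝ) (ρ : ℝ → ℝ) (ω : ℝ → Fin m → ℝ),
        IsHamSolOn c.p r θ ρ ω (Iic 0) →
        (∀ t ≤ (0:ℝ), r t ∈ Ioi (1:ℝ) ∧ θ t ∈ K ∧ |ρ t| ≤ C₀ ∧ eNorm (ω t) ≤ C₀ ∧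
          r t ≥ c₀ * |t + T₀|) →
        ∀ δ₀ ∈ Ioo (0:ℝ) δ', ∀ t ≤ (0:ℝ),
        ∀ (r' : ℝ) (θ' : Fin m → ℝ) (ρ' : ℝ) (ω' : Fin m → ℝ),
          r' ∈ Ioi (1:ℝ) → θ' ∈ U →
          |r' - r t| ≤ 10 * δ₀ * |t + T₀| → eNorm (θ' - θ t) ≤ 2 * δ₀ →
          |ρ' - ρ t| ≤ 2 * δ₀ → eNorm (ω' - ω t) ≤ 2 * δ₀ →
          |pdRho c.p r' θ' ρ' ω' - pdRho c.p (r t) (θ t) (ρ t) (ω t)|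
              ≤ 4 * δ₀ + C₁ * |t + T₀| ^ (-(1:ℝ) - μ) ∧
          eNorm (fun j => pdOmega c.p j r' θ' ρ' ω' - pdOmega c.p j (r t) (θ t) (ρ t) (ω t))
              ≤ C₁ * |t + T₀| ^ (-(1:ℝ) - μ) ∧
          |pdR c.p r' θ' ρ' ω' - pdR c.p (r t) (θ t) (ρ t) (ω t)|
              ≤ C₁ * |t + T₀| ^ (-(2:ℝ) - μ) ∧
          eNorm (fun j => pdTheta c.p j r' θ' ρ' ω' - pdTheta c.p j (r t) (θ t) (ρ t) (ω t))
              ≤ C₁ * |t + T₀| ^ (-(1:ℝ) - μ) := by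
  obtain ⟨δ', hδ', C₁, hC₁, h⟩ :=
    statement_14_general (Ioo_subset_Icc_self.trans (Icc_subset_Icc_left (by simp)) hμ) hU c hK hKU
      hc₀ C₀
  exact ⟨δ', hδ', C₁, hC₁, -1, by norm_num,
    fun T₀ hT₀ r θ ρ ω _ htraj δ₀ hδ₀ t ht r' θ' ρ' ω' hr' _ =>
      h |t + T₀| (abs_pos.2 (by linarith)) _ _ _ _ (htraj t ht) δ₀ hδ₀.2 r' θ' ρ' ω' hr'⟩

end Scattering
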